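/- Let H be a real Hilbert space and A : H → H a continuous self-adjoint linear operator that is positive (⟪x, A x⟫ ≥ 0 for all x) and invertible with continuous inverse. If Φ : ℝ → H is twice differentiable with Φ''(t) = −A(Φ(t)) for all t, then there exists a constant C, depending only on Φ(0) and Φ'(0), such that for all t ∈ ℝ: ‖Φ(t)‖ ≤ C, ‖Φ'(t)‖ ≤ C, and ‖A(Φ(t))‖ ≤ C. -/

import Mathlib

open scoped InnerProductSpace

/-- Abstract core of Theorem 2: for the wave equation `Φ'' = -A Φ` with `A` a continuous,
self-adjoint, positive, boundedly invertible operator on a real Hilbert space, the norms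
`‖Φ(t)‖`, `‖Φ'(t)‖` and `‖A(Φ(t))‖` are uniformly bounded in `t` by a constant depending
only on the initial datum `(Φ(0), Φ'(0))`. -/
theorem stmt_4 {H : Type*} [NormedAddCommGroup H] [InnerProductSpace ℝ H] [CompleteSpace H]
    (A B : H →L[ℝ] H) (hA : ∀ x y : H, ⟪A x, y⟫_ℝ = ⟪x, A y⟫_ℝ)
    (hpos : ∀ x : H, 0 ≤ ⟪x, A x⟫_ℝ)
    (hBA : ∀ x : H, B (A x) = x) (hAB : ∀ x : H, A (B x) = x)
    (Φ Φ' Φ'' : ℝ → H)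
    (hΦ : ∀ t, HasDerivAt Φ (Φ' t) t)
    (hΦ' : ∀ t, HasDerivAt Φ' (Φ'' t) t)
    (hwave : ∀ t, Φ'' t = -(A (Φ t))) :
    ∃ C : ℝ, ∀ t : ℝ, ‖Φ t‖ ≤ C ∧ ‖Φ' t‖ ≤ C ∧ ‖A (Φ t)‖ ≤ C := by
  have hBs : ∀ x y : H, ⟪B x, y⟫_ℝ = ⟪x, B y⟫_ℝ := by
    intro x y
    calc ⟪B x, y⟫_ℝ = ⟪B x, A (B y)⟫_ℝ := by rw [hAB]
      _ = ⟪A (B x), B y⟫_ℝ := (hA _ _).symm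
      _ = ⟪x, B y⟫_ℝ := by rw [hAB]
  have hBpos : ∀ x : H, 0 ≤ ⟪x, B x⟫_ℝ := by
    intro x
    have h := hpos (B x)
    rw [hAB, hBs] at h
    exact h
  have hA' : ∀ t, HasDerivAt (fun s => A (Φ s)) (A (Φ' t)) t := fun t =>
    A.hasFDerivAt.comp_hasDerivAt t (hΦ t)
  have hB' : ∀ t, HasDerivAt (fun s => B (Φ' s)) (-(Φ t)) t := fun t => by
    have h := B.hasFDerivAt.comp_hasDerivAt t (hΦ' t)
    rw [hwave, map_neg, hBA] at h
    exact h
  -- the energy at the level of `Φ'`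
  have hE1 : ∀ t, HasDerivAt (fun s => ⟪Φ' s, Φ' s⟫_ℝ + ⟪Φ s, A (Φ s)⟫_ℝ) 0 t := by
    intro t
    have h := ((hΦ' t).inner ℝ (hΦ' t)).add ((hΦ t).inner ℝ (hA' t))
    refine h.congr_deriv ?_
    rw [hwave, inner_neg_left, inner_neg_right, ← hA (Φ t) (Φ' t),
      real_inner_comm (A (Φ t)) (Φ' t)]
    ring
  -- the energy at the level of `Φ`
  have hE0 : ∀ t, HasDerivAt (fun s => ⟪Φ' s, B (Φ' s)⟫_ℝ + ⟪Φ s, Φ s⟫_ℝ) 0 t := by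
    intro t
    have h := ((hΦ' t).inner ℝ (hB' t)).add ((hΦ t).inner ℝ (hΦ t))
    refine h.congr_deriv ?_
    rw [hwave, inner_neg_left, inner_neg_right, ← hBs (A (Φ t)) (Φ' t), hBA,
      real_inner_comm (Φ t) (Φ' t)]
    ring
  have c1 := fun t => is_const_of_deriv_eq_zero (fun t => (hE1 t).differentiableAt)
    (fun t => (hE1 t).deriv) t 0
  have c0 := fun t => is_const_of_deriv_eq_zero (fun t => (hE0 t).differentiableAt)
    (fun t => (hE0 t).deriv) t 0
  simp only [real_inner_self_eq_norm_sq] at c1 c0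
  set e1 := ‖Φ' 0‖ ^ 2 + ⟪Φ 0, A (Φ 0)⟫_ℝ
  set e0 := ⟪Φ' 0, B (Φ' 0)⟫_ℝ + ‖Φ 0‖ ^ 2
  have b0 : ∀ t, ‖Φ t‖ ≤ √e0 := fun t =>
    Real.le_sqrt_of_sq_le (by linarith [c0 t, hBpos (Φ' t)])
  have b1 : ∀ t, ‖Φ' t‖ ≤ √e1 := fun t =>
    Real.le_sqrt_of_sq_le (by linarith [c1 t, hpos (Φ t)])
  have n0 := Real.sqrt_nonneg e0
  have n1 := Real.sqrt_nonneg e1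
  have n2 : 0 ≤ ‖A‖ * √e0 := by positivity
  refine ⟨√e0 + √e1 + ‖A‖ * √e0, fun t => ⟨?_, ?_, ?_⟩⟩
  · linarith [b0 t]
  · linarith [b1 t]
  · have h2 : ‖A (Φ t)‖ ≤ ‖A‖ * √e0 := A.le_opNorm_of_le (b0 t)
    linarith
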